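/- Let R be a basic left Harada algebra with modules P_{ij} := rad^{j-1}(e_{i1}R) as below, and let f : P_{ij} → P_{il} be an injective homomorphism of right R-modules with j ≥ l. Then for every non-injective homomorphism g : P_{st} → P_{il} (any 1 ≤ s ≤ m, 1 ≤ t ≤ n_s), there exists a homomorphism h : P_{st} → P_{ij} such that g = f ∘ h. -/

import Mathlib

/-!
Common setup.  `K` is an algebraically closed field and `R` a finite-dimensional associative
unital `K`-algebra.  Right `R`-modules are formalized as modules over the opposite ring `Rᵐᵒᵖ`
(so that `MulOpposite.op r • x = x * r`).
-/

open MulOpposite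

/-- The right ideal `xR` of a ring `R`, as a submodule of `R` over `Rᵐᵒᵖ`. -/
def rightIdeal (R : Type) [Ring R] (x : R) : Submodule Rᵐᵒᵖ R :=
  Submodule.span Rᵐᵒᵖ {x}

/-- The Jacobson radical of a submodule `N` (the intersection of the maximal submodules of the
module `N`), viewed as a submodule of the ambient module.  Iterating this operation gives the
iterated radicals `rad^k`. -/
def radSub {A M : Type} [Ring A] [AddCommGroup M] [Module A M] (N : Submodule A M) :
    Submodule A M :=
  Submodule.map N.subtype (sInf {P : Submodule A ↥N | IsCoatom P})

/-- A module is indecomposable if it is nonzero and admits no nontrivial direct sum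
decomposition. -/
def IsIndecomposableMod (A M : Type) [Ring A] [AddCommGroup M] [Module A M] : Prop :=
  Nontrivial M ∧ ∀ N N' : Submodule A M, IsCompl N N' → N = ⊥ ∨ N' = ⊥

/-- A module has projective dimension at most one iff it admits a surjection from a projective
module with projective kernel. -/
def PdLeOne (A : Type) [Ring A] (M : Type) [AddCommGroup M] [Module A M] : Prop :=
  ∃ (P : ModuleCat.{0} A) (f : ↥P →ₗ[A] M),
    Module.Projective A ↥P ∧ Function.Surjective f ∧
      Module.Projective A ↥(LinearMap.ker f)

/-- `Ext¹_A(M,N) = 0`, expressed by the splitting of every short exact sequence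
`0 → N → E → M → 0`. -/
def Ext1Zero (A : Type) [Ring A] (M N : Type) [AddCommGroup M] [Module A M]
    [AddCommGroup N] [Module A N] : Prop :=
  ∀ (E : ModuleCat.{0} A) (i : N →ₗ[A] ↥E) (p : ↥E →ₗ[A] M),
    Function.Injective i → Function.Surjective p → LinearMap.range i = LinearMap.ker p →
    ∃ s : M →ₗ[A] ↥E, p.comp s = LinearMap.id

/-- `X ∈ add T` : `X` is a direct summand of a finite direct sum of copies of `T`. -/
def InAdd (A : Type) [Ring A] (T X : Type) [AddCommGroup T] [Module A T]
    [AddCommGroup X] [Module A X] : Prop :=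
  ∃ (k : ℕ) (f : X →ₗ[A] (Fin k → T)) (g : (Fin k → T) →ₗ[A] X),
    g.comp f = LinearMap.id

/-- `T` is a (finitely generated) tilting right `R`-module: projective dimension at most one,
no self-extensions, and there is a short exact sequence `0 → R → T₀ → T₁ → 0` with
`T₀, T₁ ∈ add T`. -/
def IsTiltingRight (R : Type) [Ring R] (T : Type) [AddCommGroup T] [Module Rᵐᵒᵖ T] : Prop :=
  Module.Finite Rᵐᵒᵖ T ∧ PdLeOne Rᵐᵒᵖ T ∧ Ext1Zero Rᵐᵒᵖ T T ∧
    ∃ (T₀ T₁ : ModuleCat.{0} Rᵐᵒᵖ) (f : R →ₗ[Rᵐᵒᵖ] ↥T₀) (g : ↥T₀ →ₗ[Rᵐᵒᵖ] ↥T₁),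
      InAdd Rᵐᵒᵖ T ↥T₀ ∧ InAdd Rᵐᵒᵖ T ↥T₁ ∧
        Function.Injective f ∧ Function.Surjective g ∧ LinearMap.range f = LinearMap.ker g

/-- `T` is basic: it is an (internal) direct sum of pairwise non-isomorphic indecomposable
submodules. -/
def IsBasicMod (A : Type) [Ring A] (T : Type) [AddCommGroup T] [Module A T] : Prop :=
  ∃ (k : ℕ) (N : Fin k → Submodule A T),
    DirectSum.IsInternal N ∧ (∀ a, IsIndecomposableMod A ↥(N a)) ∧
      ∀ a b, a ≠ b → IsEmpty (↥(N a) ≃ₗ[A] ↥(N b))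

/-- The setoid identifying isomorphic modules (among those with property `P`). -/
def isoSetoid (A : Type) [Ring A] (P : ModuleCat.{0} A → Prop) :
    Setoid {M : ModuleCat.{0} A // P M} where
  r M N := Nonempty (↥M.1 ≃ₗ[A] ↥N.1)
  iseqv := ⟨fun M => ⟨LinearEquiv.refl A ↥M.1⟩, fun ⟨e⟩ => ⟨e.symm⟩,
    fun ⟨e⟩ ⟨f⟩ => ⟨e.trans f⟩⟩

/-- The data exhibiting a ring `R` as a basic left Harada algebra:
a complete set `{e i j}` of orthogonal primitive idempotents with pairwise non-isomorphic
right ideals `(e i j)R` (`R` is basic), such that each `(e i 0)R` is an injective right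
module, and `(e i j)R ≅ rad ((e i (j-1))R)` for `j ≥ 1`.  (Indices are shifted by one from
the paper: the paper's `e_{ij}` is `e i (j-1)` here.) -/
structure HaradaData (R : Type) [Ring R] : Type where
  m : ℕ
  hm : 0 < m
  n : Fin m → ℕ
  hn : ∀ i, 0 < n i
  e : (i : Fin m) → Fin (n i) → R
  idem : ∀ i j, IsIdempotentElem (e i j)
  orth : ∀ p q : Σ i : Fin m, Fin (n i), p ≠ q → e p.1 p.2 * e q.1 q.2 = 0
  sum_eq_one : ∑ p : Σ i : Fin m, Fin (n i), e p.1 p.2 = 1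
  indec : ∀ i j, IsIndecomposableMod Rᵐᵒᵖ ↥(rightIdeal R (e i j))
  basic : ∀ p q : Σ i : Fin m, Fin (n i), p ≠ q →
    IsEmpty (↥(rightIdeal R (e p.1 p.2)) ≃ₗ[Rᵐᵒᵖ] ↥(rightIdeal R (e q.1 q.2)))
  inj : ∀ i, Module.Injective Rᵐᵒᵖ ↥(rightIdeal R (e i ⟨0, hn i⟩))
  rad_iso : ∀ (i : Fin m) (j : Fin (n i)), 0 < j.val →
    Nonempty (↥(rightIdeal R (e i j)) ≃ₗ[Rᵐᵒᵖ]
      ↥(radSub (rightIdeal R (e i ⟨j.val - 1, Nat.lt_of_le_of_lt (Nat.sub_le j.val 1) j.isLt⟩))))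

variable {R : Type} [Ring R]

/-- `H.P i j = rad^j ((e i 0)R)`; this is the paper's `P_{i,j+1} = rad^j (e_{i1}R)`,
a submodule of `R`. -/
def HaradaData.P (H : HaradaData R) (i : Fin H.m) (j : Fin (H.n i)) : Submodule Rᵐᵒᵖ R :=
  radSub^[j.val] (rightIdeal R (H.e i ⟨0, H.hn i⟩))

/-- The quotient module `P_{ik}/P_{il}` (for `l ≥ k` we have `H.P i l ≤ H.P i k`). -/
abbrev HaradaData.Quot (H : HaradaData R) (i : Fin H.m) (k l : Fin (H.n i)) : Type :=
  ↥(H.P i k) ⧸ Submodule.comap (H.P i k).subtype (H.P i l)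

/-- The last index (the paper's `n_i`) in `Fin (H.n i)`. -/
def HaradaData.last (H : HaradaData R) (i : Fin H.m) : Fin (H.n i) :=
  ⟨H.n i - 1, Nat.sub_lt (H.hn i) one_pos⟩

/-- The right ideal `I = ⊕_{i,j} rad^{n_i - j + 1}(e_{ij}R)` of the paper. -/
def HaradaData.I (H : HaradaData R) : Submodule Rᵐᵒᵖ R :=
  ⨆ p : Σ i : Fin H.m, Fin (H.n i),
    radSub^[H.n p.1 - p.2.val] (rightIdeal R (H.e p.1 p.2))

/-- The submodule `T·I` of a right module `T`, for `I` a right ideal of `R`. -/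
def smulSub (I : Submodule Rᵐᵒᵖ R) (T : Type) [AddCommGroup T] [Module Rᵐᵒᵖ T] :
    Submodule Rᵐᵒᵖ T :=
  Submodule.span Rᵐᵒᵖ {x : T | ∃ (t : T) (r : R), r ∈ I ∧ x = op r • t}

/-!
By Fitting's lemma an indecomposable projective module `N` of finite length is local: a submodule
of `N` is all of `N` or lies in `rad N`. Applying this along the chain
`P_{i1} ⊇ P_{i2} ⊇ ⋯`, every submodule of `e_{i1}R` is contained in `P_{ij}` or is one of the
`P_{ik}` above it. The image of an injective `f : P_{ij} → P_{il}` is therefore comparable with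
`P_{ij}`, and being isomorphic to it, it equals `P_{ij}`. The image of a non-injective `g` on an
indecomposable module is never one of the `P_{ik}`: these are projective, so `g` would split off
its kernel. Hence `im g ⊆ P_{ij} = im f`, and `g` factors through `f`.
-/

section LinearMaps

variable {A M N Q : Type*} [Ring A] [AddCommGroup M] [Module A M] [AddCommGroup N] [Module A N]
  [AddCommGroup Q] [Module A Q]

theorem exists_eq_comp_of_range_le {f : M →ₗ[A] N} (hf : Function.Injective f) {g : Q →ₗ[A] N}
    (hgf : LinearMap.range g ≤ LinearMap.range f) : ∃ h : Q →ₗ[A] M, g = f ∘ₗ h := by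
  let e := LinearEquiv.ofInjective f hf
  refine ⟨e.symm ∘ₗ g.codRestrict (LinearMap.range f) fun x ↦ hgf ⟨x, rfl⟩, ?_⟩
  ext x
  exact congrArg Subtype.val (e.apply_symm_apply ⟨g x, hgf ⟨x, rfl⟩⟩).symm

theorem isCompl_range_ker_of_comp_eq_id {g : M →ₗ[A] N} {σ : N →ₗ[A] M}
    (hgσ : g ∘ₗ σ = LinearMap.id) : IsCompl (LinearMap.range σ) (LinearMap.ker g) := by
  have hidem : IsIdempotentElem (σ ∘ₗ g) := by
    change σ ∘ₗ (g ∘ₗ σ) ∘ₗ g = σ ∘ₗ g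
    rw [hgσ, LinearMap.id_comp]
  have hrange : LinearMap.range (σ ∘ₗ g) = LinearMap.range σ :=
    LinearMap.range_comp_of_range_eq_top _ <| LinearMap.range_eq_top.2 <|
      LinearMap.surjective_of_comp_eq_id σ g hgσ
  have hker : LinearMap.ker (σ ∘ₗ g) = LinearMap.ker g :=
    LinearMap.ker_comp_of_ker_eq_bot _ <| LinearMap.ker_eq_bot.2 <|
      LinearMap.injective_of_comp_eq_id σ g hgσ
  exact hrange ▸ hker ▸ LinearMap.IsIdempotentElem.isCompl hidem

theorem eq_of_le_of_linearEquiv [IsArtinian A M] {X Y : Submodule A M} (e : X ≃ₗ[A] Y)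
    (hXY : X ≤ Y) : X = Y := by
  have hinj : Function.Injective (Submodule.inclusion hXY ∘ₗ e.symm.toLinearMap) :=
    (Submodule.inclusion_injective hXY).comp e.symm.injective
  refine le_antisymm hXY fun y hy ↦ ?_
  obtain ⟨z, hz⟩ := IsArtinian.surjective_of_injective_endomorphism _ hinj ⟨y, hy⟩
  rw [← show (e.symm z : M) = y from congrArg Subtype.val hz]
  exact (e.symm z).2

theorem projective_range_of_isIdempotentElem [Module.Projective A M] {u : Module.End A M}
    (hu : IsIdempotentElem u) : Module.Projective A (LinearMap.range u) := by
  refine .of_split (LinearMap.range u).subtype u.rangeRestrict ?_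
  ext ⟨_, x, rfl⟩
  exact LinearMap.congr_fun hu x

theorem exists_end_range_le_of_codisjoint [Module.Projective A M] {X Y : Submodule A M}
    (hXY : Codisjoint X Y) :
    ∃ u : Module.End A M, LinearMap.range u ≤ X ∧ LinearMap.range (1 - u) ≤ Y := by
  have hsurj : Function.Surjective (Y.mkQ ∘ₗ X.subtype) := by
    rw [← LinearMap.range_eq_top, LinearMap.range_comp, Submodule.range_subtype,
      Submodule.map_mkQ_eq_top, sup_comm]
    exact hXY.eq_top
  obtain ⟨v, hv⟩ := Module.projective_lifting_property _ Y.mkQ hsurj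
  refine ⟨X.subtype ∘ₗ v, ?_, ?_⟩
  · rintro _ ⟨x, rfl⟩
    exact (v x).2
  · rintro _ ⟨x, rfl⟩
    exact (Submodule.Quotient.eq Y).1 (LinearMap.congr_fun hv x).symm

end LinearMaps

namespace IsIndecomposableMod

variable {A M N : Type} [Ring A] [AddCommGroup M] [Module A M] [AddCommGroup N] [Module A N]

theorem of_linearEquiv (hM : IsIndecomposableMod A M) (e : M ≃ₗ[A] N) :
    IsIndecomposableMod A N := by
  have := hM.1
  refine ⟨e.symm.toEquiv.nontrivial, fun X Y hXY ↦ ?_⟩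
  let φ := Submodule.orderIsoMapComap e.symm
  exact (hM.2 _ _ (φ.isCompl hXY)).imp (map_eq_bot_iff φ).1 (map_eq_bot_iff φ).1

theorem injective_of_surjective [Module.Projective A N] [Nontrivial N]
    (hM : IsIndecomposableMod A M) {g : M →ₗ[A] N} (hg : Function.Surjective g) :
    Function.Injective g := by
  obtain ⟨σ, hσ⟩ := g.exists_rightInverse_of_surjective (LinearMap.range_eq_top.2 hg)
  refine LinearMap.ker_eq_bot.1 <|
    (hM.2 _ _ (isCompl_range_ker_of_comp_eq_id hσ)).resolve_left fun hrange ↦ ?_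
  obtain ⟨y, hy⟩ := exists_ne (0 : N)
  have hσ_zero : σ = 0 := LinearMap.range_eq_bot.1 hrange
  exact hy <| by simpa [hσ_zero] using (LinearMap.congr_fun hσ y).symm

theorem isUnit_or_isNilpotent [IsArtinian A M] [IsNoetherian A M] (hM : IsIndecomposableMod A M)
    (u : Module.End A M) : IsUnit u ∨ IsNilpotent u := by
  obtain ⟨n, hn, hcompl⟩ := ((Filter.eventually_ge_atTop 1).and
    u.eventually_isCompl_ker_pow_range_pow).exists
  refine (hM.2 _ _ hcompl).imp (fun hker ↦ ?_) fun hrange ↦ ⟨n, LinearMap.range_eq_bot.1 hrange⟩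
  rw [← isUnit_pow_iff (Nat.one_le_iff_ne_zero.1 hn), Module.End.isUnit_iff]
  exact IsArtinian.bijective_of_injective_endomorphism _ (LinearMap.ker_eq_bot.1 hker)

variable [Module.Projective A M] [IsArtinian A M] [IsNoetherian A M]

theorem eq_top_or_eq_top_of_codisjoint (hM : IsIndecomposableMod A M) {X Y : Submodule A M}
    (hXY : Codisjoint X Y) : X = ⊤ ∨ Y = ⊤ := by
  have eq_top_of_isUnit {v : Module.End A M} {Z : Submodule A M} (hv : IsUnit v)
      (hvZ : LinearMap.range v ≤ Z) : Z = ⊤ :=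
    top_unique <| (LinearMap.range_eq_top.2 ((Module.End.isUnit_iff v).1 hv).2).ge.trans hvZ
  obtain ⟨u, huX, huY⟩ := exists_end_range_le_of_codisjoint hXY
  exact (hM.isUnit_or_isNilpotent u).imp (eq_top_of_isUnit · huX)
    fun hu ↦ eq_top_of_isUnit hu.isUnit_one_sub huY

theorem eq_top_or_le_jacobson (hM : IsIndecomposableMod A M) (X : Submodule A M) :
    X = ⊤ ∨ X ≤ Module.jacobson A M := by
  refine or_iff_not_imp_left.2 fun hX ↦ le_sInf fun Y (hY : IsCoatom Y) ↦ ?_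
  by_contra hXY
  have hcodisj : Codisjoint X Y := (hY.not_le_iff_codisjoint.1 hXY).symm
  exact (hM.eq_top_or_eq_top_of_codisjoint hcodisj).elim hX hY.1

end IsIndecomposableMod

section Radical

variable {A M : Type} [Ring A] [AddCommGroup M] [Module A M]

theorem radSub_le (N : Submodule A M) : radSub N ≤ N :=
  Submodule.map_subtype_le _ _

theorem antitone_iterate_radSub (N : Submodule A M) : Antitone fun k ↦ radSub^[k] N :=
  fun _ _ hkl ↦ Function.antitone_iterate_of_le_id radSub_le hkl N

theorem nonempty_radSub_linearEquiv {N N' : Submodule A M} (e : N ≃ₗ[A] N') :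
    Nonempty (radSub N ≃ₗ[A] radSub N') := by
  have hmap : (Module.jacobson A N).map (e : N →ₗ[A] N') = Module.jacobson A N' :=
    Module.map_jacobson_of_bijective e.bijective
  have jacobsonEquiv (L : Submodule A M) : Module.jacobson A L ≃ₗ[A] radSub L :=
    Submodule.equivMapOfInjective L.subtype L.injective_subtype _
  exact ⟨(jacobsonEquiv N).symm ≪≫ₗ e.submoduleMap _ ≪≫ₗ LinearEquiv.ofEq _ _ hmap ≪≫ₗ
    jacobsonEquiv N'⟩

variable [IsArtinian A M] [IsNoetherian A M]

theorem eq_or_le_radSub {N : Submodule A M} [Module.Projective A N]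
    (hN : IsIndecomposableMod A N) {X : Submodule A M} (hXN : X ≤ N) : X = N ∨ X ≤ radSub N := by
  have hX : (X.comap N.subtype).map N.subtype = X := by
    rw [Submodule.map_comap_subtype, inf_eq_right.2 hXN]
  rw [← hX]
  refine (hN.eq_top_or_le_jacobson (X.comap N.subtype)).imp (fun htop ↦ ?_) Submodule.map_mono
  rw [htop, Submodule.map_subtype_top]

theorem le_iterate_radSub_or_eq {N X : Submodule A M} (hXN : X ≤ N) (k : ℕ)
    (hproj : ∀ a < k, Module.Projective A ↥(radSub^[a] N))
    (hindec : ∀ a < k, IsIndecomposableMod A ↥(radSub^[a] N)) :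
    X ≤ radSub^[k] N ∨ ∃ a < k, X = radSub^[a] N := by
  induction k with
  | zero => exact .inl hXN
  | succ k ih =>
    rcases ih (fun a ha ↦ hproj a (by lia)) (fun a ha ↦ hindec a (by lia)) with hle | ⟨a, ha, hX⟩
    · have := hproj k k.lt_succ_self
      rcases eq_or_le_radSub (hindec k k.lt_succ_self) hle with hX | hX
      · exact .inr ⟨k, k.lt_succ_self, hX⟩
      · exact .inl <| by rwa [Function.iterate_succ_apply']
    · exact .inr ⟨a, by lia, hX⟩

end Radical

section RightIdeals

/-- The identification, by `unop`, of `Rᵐᵒᵖ` as a left module over itself with the regular right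
module `R`; it makes the latter finite and projective. -/
def rightRegularEquiv (R : Type*) [Ring R] : Rᵐᵒᵖ ≃ₗ[Rᵐᵒᵖ] R where
  __ := opAddEquiv.symm
  map_smul' _ _ := rfl

theorem rightIdeal_eq_range_mulLeft (x : R) :
    rightIdeal R x = LinearMap.range (LinearMap.mulLeft Rᵐᵒᵖ x) := by
  ext y
  rw [rightIdeal, Submodule.mem_span_singleton]
  exact op_surjective.exists

theorem projective_rightIdeal {e : R} (he : IsIdempotentElem e) :
    Module.Projective Rᵐᵒᵖ (rightIdeal R e) := by
  have : Module.Projective Rᵐᵒᵖ R := .of_equiv (rightRegularEquiv R)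
  have hidem : IsIdempotentElem (LinearMap.mulLeft Rᵐᵒᵖ e) := by
    change LinearMap.mulLeft Rᵐᵒᵖ e ∘ₗ LinearMap.mulLeft Rᵐᵒᵖ e = _
    rw [← LinearMap.mulLeft_mul, he.eq]
  rw [rightIdeal_eq_range_mulLeft]
  exact projective_range_of_isIdempotentElem hidem

end RightIdeals

namespace HaradaData

variable (H : HaradaData R) (i : Fin H.m) (j : Fin (H.n i))

theorem nonempty_rightIdeal_linearEquiv_P :
    Nonempty (rightIdeal R (H.e i j) ≃ₗ[Rᵐᵒᵖ] H.P i j) := by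
  obtain ⟨k, hk⟩ := j
  induction k with
  | zero => exact ⟨LinearEquiv.refl _ _⟩
  | succ k ih =>
    obtain ⟨e⟩ := ih (by lia)
    obtain ⟨e_rad⟩ := H.rad_iso i ⟨k + 1, hk⟩ k.succ_pos
    obtain ⟨rad_e⟩ := nonempty_radSub_linearEquiv e
    have hP : radSub (H.P i ⟨k, by lia⟩) = H.P i ⟨k + 1, hk⟩ :=
      (Function.iterate_succ_apply' _ _ _).symm
    exact ⟨e_rad ≪≫ₗ rad_e ≪≫ₗ LinearEquiv.ofEq _ _ hP⟩

instance projective_P : Module.Projective Rᵐᵒᵖ (H.P i j) := by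
  obtain ⟨e⟩ := H.nonempty_rightIdeal_linearEquiv_P i j
  have := projective_rightIdeal (H.idem i j)
  exact .of_equiv e

theorem isIndecomposableMod_P : IsIndecomposableMod Rᵐᵒᵖ (H.P i j) := by
  obtain ⟨e⟩ := H.nonempty_rightIdeal_linearEquiv_P i j
  exact (H.indec i j).of_linearEquiv e

theorem antitone_P : Antitone (H.P i) :=
  fun _ _ hkl ↦ antitone_iterate_radSub _ hkl

theorem P_le_P_zero : H.P i j ≤ H.P i ⟨0, H.hn i⟩ :=
  H.antitone_P i (Nat.zero_le j)

variable {H i j} [IsArtinian Rᵐᵒᵖ R] [IsNoetherian Rᵐᵒᵖ R]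

theorem le_P_or_eq_P {X : Submodule Rᵐᵒᵖ R}
    (hX : X ≤ H.P i ⟨0, H.hn i⟩) : X ≤ H.P i j ∨ ∃ k < j, X = H.P i k := by
  refine (le_iterate_radSub_or_eq hX j (fun a ha ↦ H.projective_P i ⟨a, ha.trans j.2⟩)
    fun a ha ↦ H.isIndecomposableMod_P i ⟨a, ha.trans j.2⟩).imp id ?_
  rintro ⟨a, ha, hXa⟩
  exact ⟨⟨a, ha.trans j.2⟩, ha, hXa⟩

theorem range_eq_P_of_injective {f : H.P i j →ₗ[Rᵐᵒᵖ] R}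
    (hf : Function.Injective f) (hrange : LinearMap.range f ≤ H.P i ⟨0, H.hn i⟩) :
    LinearMap.range f = H.P i j := by
  let e := LinearEquiv.ofInjective f hf
  rcases le_P_or_eq_P (j := j) hrange with hle | ⟨k, hkj, hk⟩
  · exact eq_of_le_of_linearEquiv e.symm hle
  · exact (eq_of_le_of_linearEquiv e (hk ▸ H.antitone_P i hkj.le)).symm

theorem range_le_P_of_not_injective {M : Type} [AddCommGroup M] [Module Rᵐᵒᵖ M]
    (hM : IsIndecomposableMod Rᵐᵒᵖ M) {g : M →ₗ[Rᵐᵒᵖ] R}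
    (hg : ¬ Function.Injective g) (hrange : LinearMap.range g ≤ H.P i ⟨0, H.hn i⟩) :
    LinearMap.range g ≤ H.P i j := by
  refine (le_P_or_eq_P hrange).resolve_right ?_
  rintro ⟨k, -, hk⟩
  have : Module.Projective Rᵐᵒᵖ (LinearMap.range g) := hk ▸ H.projective_P i k
  have : Nontrivial (LinearMap.range g) := hk ▸ (H.isIndecomposableMod_P i k).1
  have hinj := hM.injective_of_surjective g.surjective_rangeRestrict
  exact hg <| Subtype.val_injective.comp hinj

end HaradaData

theorem statement8_general [IsArtinianRing Rᵐᵒᵖ] (H : HaradaData R) {i : Fin H.m}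
    {j l : Fin (H.n i)} {f : H.P i j →ₗ[Rᵐᵒᵖ] H.P i l} (hf : Function.Injective f)
    {M : Type} [AddCommGroup M] [Module Rᵐᵒᵖ M] (hM : IsIndecomposableMod Rᵐᵒᵖ M)
    {g : M →ₗ[Rᵐᵒᵖ] H.P i l} (hg : ¬ Function.Injective g) :
    ∃ h : M →ₗ[Rᵐᵒᵖ] H.P i j, g = f ∘ₗ h := by
  have : Module.Finite Rᵐᵒᵖ R := .equiv (rightRegularEquiv R)
  let ι := (H.P i l).subtype
  have hι : Function.Injective ι := (H.P i l).injective_subtype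
  have hιf : Function.Injective (ι ∘ₗ f) := hι.comp hf
  have range_le {Q : Type} [AddCommGroup Q] [Module Rᵐᵒᵖ Q] (u : Q →ₗ[Rᵐᵒᵖ] H.P i l) :
      LinearMap.range (ι ∘ₗ u) ≤ H.P i ⟨0, H.hn i⟩ :=
    (LinearMap.range_comp_le_range u ι).trans <|
      (H.P i l).range_subtype.trans_le (H.P_le_P_zero i l)
  have hf_range : LinearMap.range (ι ∘ₗ f) = H.P i j :=
    HaradaData.range_eq_P_of_injective hιf (range_le f)
  have hιg : ¬ Function.Injective (ι ∘ₗ g) := fun h ↦ hg (Function.Injective.of_comp (f := ι) h)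
  have hg_range : LinearMap.range (ι ∘ₗ g) ≤ H.P i j :=
    HaradaData.range_le_P_of_not_injective hM hιg (range_le g)
  obtain ⟨h, hh⟩ := exists_eq_comp_of_range_le hιf (hg_range.trans hf_range.ge)
  exact ⟨h, (LinearMap.cancel_left hι).1 hh⟩

/-- Lemma 2.3(4).  Let `f : P_{ij} → P_{il}` be injective, `j ≥ l`.  Every
non-injective `g : P_{st} → P_{il}` factors as `g = f ∘ h`. -/
theorem statement8 (K R : Type) [Field K] [IsAlgClosed K] [Ring R] [Algebra K R]
    [FiniteDimensional K R] (H : HaradaData R) (i : Fin H.m) (j l : Fin (H.n i))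
    (f : ↥(H.P i j) →ₗ[Rᵐᵒᵖ] ↥(H.P i l)) (hf : Function.Injective f) (hjl : l ≤ j)
    (s : Fin H.m) (t : Fin (H.n s))
    (g : ↥(H.P s t) →ₗ[Rᵐᵒᵖ] ↥(H.P i l)) (hg : ¬ Function.Injective g) :
    ∃ h : ↥(H.P s t) →ₗ[Rᵐᵒᵖ] ↥(H.P i j), g = f.comp h := by
  have : IsArtinianRing Rᵐᵒᵖ := .of_finite K Rᵐᵒᵖ
  exact statement8_general H hf (H.isIndecomposableMod_P s t) hg
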